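/- arXiv:math/0405350 — 2 statements merged into one kernel-verified Lean document; each statement's English description precedes it below -/
import Mathlib

section
/- Let A be a ring, L a left A-module, N ⊆ L a submodule, and W ⊆ L/N a submodule with quotient W′ = (L/N)/W. If Ext¹_A(W,N) = 0, then L has a submodule W̃ isomorphic to W such that the quotient L/W̃ contains a submodule isomorphic to N whose quotient is isomorphic to W′; in other words, there are short exact sequences 0 → W̃ → L → N″ → 0 and 0 → N → N″ → W′ → 0. (Moving Lemma: a subquotient W sitting above N in a filtration of L can be moved below N when Ext¹_A(W,N) vanishes.) -/
open CategoryTheory Opposite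

noncomputable section

/-- `Ext¹` of left `A`-modules (as a `ℤ`-module). -/
def Ext1 (A : Type) [Ring A] (M N : Type) [AddCommGroup M] [Module A M]
    [AddCommGroup N] [Module A N] : ModuleCat ℤ :=
  ((Ext ℤ (ModuleCat A) 1).obj (op (ModuleCat.of A M))).obj (ModuleCat.of A N)

open CategoryTheory.Limits in
theorem exists_factor_of_ext {C : Type*} [Category C] [Abelian C] [EnoughProjectives C]
    {Z Y : C} (P : ProjectiveResolution Z)
    (h : IsZero (((Ext ℤ C 1).obj (op Z)).obj Y)) (φ : P.complex.X 1 ⟶ Y)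
    (hφ : P.complex.d 2 1 ≫ φ = 0) : ∃ ψ : P.complex.X 0 ⟶ Y, P.complex.d 1 0 ≫ ψ = φ := by
  have h1 : IsZero ((P.complex.linearYonedaObj ℤ Y).homology 1) := h.of_iso (P.isoExt 1 Y).symm
  rw [← HomologicalComplex.exactAt_iff_isZero_homology,
    HomologicalComplex.exactAt_iff' _ 0 1 2 (by simp) (by simp),
    ShortComplex.moduleCat_exact_iff] at h1
  obtain ⟨ψ, hψ⟩ := h1 φ hφ
  exact ⟨ψ, hψ⟩

open CategoryTheory.Limits in
theorem exists_lift_of_ext {C : Type*} [Category C] [Abelian C] [EnoughProjectives C]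
    (S : ShortComplex C) (hS : S.ShortExact) {Z : C} (i : Z ⟶ S.X₃)
    (h : IsZero (((Ext ℤ C 1).obj (op Z)).obj S.X₁)) : ∃ s : Z ⟶ S.X₂, s ≫ S.g = i := by
  have := hS.mono_f
  have := hS.epi_g
  let P := ProjectiveResolution.of Z
  let p : P.complex.X 0 ⟶ Z := P.π.f 0
  have hdp : P.complex.d 1 0 ≫ p = 0 := P.complex_d_comp_π_f_zero
  let a : P.complex.X 0 ⟶ S.X₂ := Projective.factorThru (p ≫ i) S.g
  have ha : a ≫ S.g = p ≫ i := Projective.factorThru_comp _ _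
  have hda : (P.complex.d 1 0 ≫ a) ≫ S.g = 0 := by
    rw [Category.assoc, ha, reassoc_of% hdp, zero_comp]
  let φ := hS.exact.lift _ hda
  have hφ : φ ≫ S.f = P.complex.d 1 0 ≫ a := hS.exact.lift_f _ hda
  obtain ⟨ψ, hψ⟩ := exists_factor_of_ext P h φ (by
    rw [← cancel_mono S.f, Category.assoc, hφ]; simp)
  have hk : P.complex.d 1 0 ≫ (a - ψ ≫ S.f) = 0 := by
    rw [Preadditive.comp_sub, reassoc_of% hψ, hφ, sub_self]
  have : Epi p := inferInstanceAs (Epi (P.π.f 0))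
  obtain ⟨t, hs⟩ : ∃ t : Z ⟶ S.X₂, p ≫ t = a - ψ ≫ S.f :=
    ⟨P.exact₀.desc _ hk, P.exact₀.g_desc _ hk⟩
  refine ⟨t, ?_⟩
  rw [← cancel_epi p]
  rw [reassoc_of% hs]
  simp [ha]

/-- Moving Lemma: if `N ⊆ L` and `W ⊆ L/N` with `Ext¹(W,N) = 0`,
then `W` can be moved below `N`: there is a submodule `W̃ ⊆ L` isomorphic to `W` with
`L/W̃` an extension of `W′ = (L/N)/W` by `N`. -/
theorem moving_lemma (A : Type) [Ring A] (L : Type) [AddCommGroup L] [Module A L]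
    (N : Submodule A L) (W : Submodule A (L ⧸ N))
    (hext : Subsingleton (Ext1 A ↥W ↥N)) :
    ∃ Wt : Submodule A L, Nonempty (↥Wt ≃ₗ[A] ↥W) ∧
      ∃ Nsub : Submodule A (L ⧸ Wt), Nonempty (↥Nsub ≃ₗ[A] ↥N) ∧
        Nonempty (((L ⧸ Wt) ⧸ Nsub) ≃ₗ[A] ((L ⧸ N) ⧸ W)) := by
  have hz : Limits.IsZero (((Ext ℤ (ModuleCat A) 1).obj (op (ModuleCat.of A ↥W))).obj
      (ModuleCat.of A ↥N)) := by
    have : Subsingleton (((Ext ℤ (ModuleCat A) 1).obj (op (ModuleCat.of A ↥W))).obj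
      (ModuleCat.of A ↥N)) := hext
    exact ModuleCat.isZero_of_subsingleton _
  obtain ⟨sc, hsc⟩ := exists_lift_of_ext
    (ShortComplex.mk (ModuleCat.ofHom N.subtype) (ModuleCat.ofHom N.mkQ) (by ext x; simp))
    { exact := by
        rw [ShortComplex.moduleCat_exact_iff]
        intro x hx
        exact ⟨⟨x, (Submodule.Quotient.mk_eq_zero N).1 hx⟩, rfl⟩
      mono_f := (ModuleCat.mono_iff_injective _).2 N.injective_subtype
      epi_g := (ModuleCat.epi_iff_surjective _).2 N.mkQ_surjective }
    (ModuleCat.ofHom W.subtype) hz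
  obtain ⟨s, hs⟩ : ∃ s : ↥W →ₗ[A] L, ∀ w, N.mkQ (s w) = w :=
    ⟨sc.hom, fun w => congrArg (fun f => f.hom w) hsc⟩
  have hinj : Function.Injective s := fun x y h => by
    apply Subtype.ext
    rw [← hs, ← hs, h]
  have hle : LinearMap.range s ≤ LinearMap.ker (W.mkQ ∘ₗ N.mkQ) := by
    rintro _ ⟨w, rfl⟩
    rw [LinearMap.mem_ker, LinearMap.comp_apply, hs]
    simp
  have hNi : Function.Injective ((LinearMap.range s).mkQ ∘ₗ N.subtype) := by
    rw [← LinearMap.ker_eq_bot, LinearMap.ker_eq_bot']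
    rintro ⟨x, hx⟩ h
    obtain ⟨w, rfl⟩ := (Submodule.Quotient.mk_eq_zero _).1 h
    have h0 : N.mkQ (s w) = 0 := (Submodule.Quotient.mk_eq_zero N).2 hx
    rw [hs] at h0
    have hw : w = 0 := Subtype.ext h0
    apply Subtype.ext
    simp [hw]
  refine ⟨LinearMap.range s, ⟨(LinearEquiv.ofInjective s hinj).symm⟩,
    LinearMap.range ((LinearMap.range s).mkQ ∘ₗ N.subtype),
    ⟨(LinearEquiv.ofInjective _ hNi).symm⟩, ?_⟩
  let f := (LinearMap.range s).liftQ (W.mkQ ∘ₗ N.mkQ) hle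
  have hf : Function.Surjective f := by
    intro y
    obtain ⟨z, rfl⟩ := W.mkQ_surjective y
    obtain ⟨x, rfl⟩ := N.mkQ_surjective z
    exact ⟨(LinearMap.range s).mkQ x, rfl⟩
  have hk : LinearMap.range ((LinearMap.range s).mkQ ∘ₗ N.subtype) = LinearMap.ker f := by
    apply le_antisymm
    · rintro _ ⟨x, rfl⟩
      have h0 : N.mkQ (x : L) = 0 := (Submodule.Quotient.mk_eq_zero N).2 x.2
      change W.mkQ (N.mkQ (x : L)) = 0
      rw [h0, map_zero]
    · intro y hy
      obtain ⟨x, rfl⟩ := (LinearMap.range s).mkQ_surjective y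
      have hyc : W.mkQ (N.mkQ x) = 0 := hy
      have hw : N.mkQ x ∈ W := (Submodule.Quotient.mk_eq_zero W).1 hyc
      have hn : x - s ⟨_, hw⟩ ∈ N := by
        rw [← Submodule.Quotient.mk_eq_zero N, ← Submodule.mkQ_apply, map_sub, hs, sub_self]
      refine ⟨⟨_, hn⟩, ?_⟩
      have h0 : (LinearMap.range s).mkQ (s ⟨_, hw⟩) = 0 :=
        (Submodule.Quotient.mk_eq_zero _).2 ⟨_, rfl⟩
      change (LinearMap.range s).mkQ (x - s ⟨_, hw⟩) = _
      rw [map_sub, h0, sub_zero]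
  exact ⟨(Submodule.quotEquivOfEq _ _ hk).trans (f.quotKerEquivOfSurjective hf)⟩

end
end

section
/- Let A be a ring and E a left A-module of finite length with set of composition factors 𝒱 = Supp(E). Let 𝒱₀ ⊆ 𝒱 be a subfamily such that Ext¹_A(V,W) = 0 for every V ∈ 𝒱₀ and every W ∈ 𝒱 ∖ 𝒱₀. Then E has a submodule E′ whose composition factors (counted with multiplicity) are exactly the composition factors of E lying in 𝒱₀, and the composition factors of E/E′ are exactly those of E lying in 𝒱 ∖ 𝒱₀. -/
open CategoryTheory Opposite

noncomputable section

/-- Cocycles in degree one are coboundaries when `Ext¹` vanishes. -/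
lemma ext1_cocycle (A : Type) [Ring A] (M N : ModuleCat.{0} A)
    (h : Subsingleton (((Ext ℤ (ModuleCat A) 1).obj (op M)).obj N))
    (P : ProjectiveResolution M) (c : P.complex.X 1 ⟶ N) (hc : P.complex.d 2 1 ≫ c = 0) :
    ∃ s : P.complex.X 0 ⟶ N, P.complex.d 1 0 ≫ s = c := by
  have h0 := ModuleCat.isZero_iff_subsingleton.2 h
  have h1 := Limits.IsZero.of_iso h0 (P.isoExt (R := ℤ) 1 N).symm
  rw [← HomologicalComplex.exactAt_iff_isZero_homology,
    HomologicalComplex.exactAt_iff' _ 0 1 2 (by simp) (by simp),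
    ShortComplex.moduleCat_exact_iff] at h1
  obtain ⟨s, hs⟩ := h1 c hc
  exact ⟨s, hs⟩

lemma res_exact (A : Type) [Ring A] (M : ModuleCat.{0} A)
    (P : ProjectiveResolution M) (π : P.complex.X 0 ⟶ M) (hπ : π = P.π.f 0)
    (x : P.complex.X 0) (hx : π x = 0) :
    ∃ y, P.complex.d 1 0 y = x := by
  have h1 := ShortComplex.exact_of_g_is_cokernel
    (ShortComplex.mk _ _ P.complex_d_comp_π_f_zero) P.isColimitCokernelCofork
  rw [ShortComplex.moduleCat_exact_iff] at h1
  subst hπ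
  exact h1 x hx

lemma ext1_extend (A : Type) [Ring A] (V W K N : Type)
    [AddCommGroup V] [Module A V] [AddCommGroup W] [Module A W]
    [AddCommGroup K] [Module A K] [AddCommGroup N] [Module A N]
    (h : Subsingleton (Ext1 A V W)) (i : N →ₗ[A] K) (g : K →ₗ[A] V)
    (hi : Function.Injective i) (hg : Function.Surjective g) (hig : Function.Exact i g)
    (f : N →ₗ[A] W) : ∃ h : K →ₗ[A] W, ∀ n, h (i n) = f n := by
  obtain ⟨P⟩ := HasProjectiveResolution.out (Z := ModuleCat.of A V)
  let π : P.complex.X 0 ⟶ ModuleCat.of A V := P.π.f 0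
  have hepi : Epi (ModuleCat.ofHom g) := (ModuleCat.epi_iff_surjective _).2 hg
  let p : P.complex.X 0 ⟶ ModuleCat.of A K := Projective.factorThru π (ModuleCat.ofHom g)
  have hp : ∀ x, g (p x) = π x := fun x =>
    congrArg (fun t => t.hom x) (Projective.factorThru_comp π (ModuleCat.ofHom g))
  have hdπ : ∀ y, π (P.complex.d 1 0 y) = 0 := fun y =>
    congrArg (fun t => t.hom y) P.complex_d_comp_π_f_zero
  have hmem : ∀ y, p (P.complex.d 1 0 y) ∈ LinearMap.range i := fun y =>
    (hig _).1 (by rw [hp, hdπ])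
  let e := LinearEquiv.ofInjective i hi
  let q : P.complex.X 1 →ₗ[A] N :=
    e.symm.toLinearMap ∘ₗ LinearMap.codRestrict _ (p.hom ∘ₗ (P.complex.d 1 0).hom) hmem
  have hq : ∀ y, i (q y) = p (P.complex.d 1 0 y) := fun y =>
    congrArg Subtype.val (e.apply_symm_apply ⟨_, hmem y⟩)
  have hdd : ∀ z, P.complex.d 1 0 (P.complex.d 2 1 z) = 0 := fun z =>
    congrArg (fun t => t.hom z) (P.complex.d_comp_d 2 1 0)
  obtain ⟨s, hs⟩ := ext1_cocycle A _ _ h P (ModuleCat.ofHom (f ∘ₗ q)) (by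
    ext z
    have : q (P.complex.d 2 1 z) = 0 := hi (by rw [hq, hdd]; simp)
    change f (q (P.complex.d 2 1 z)) = 0
    rw [this, map_zero])
  have hs' : ∀ y, s (P.complex.d 1 0 y) = f (q y) := fun y =>
    congrArg (fun t => t.hom y) hs
  have hπs : Function.Surjective π := (ModuleCat.epi_iff_surjective _).1
    (inferInstanceAs (Epi (P.π.f 0)))
  let Φ : (N × P.complex.X 0) →ₗ[A] K := i.coprod p.hom
  let Ψ : (N × P.complex.X 0) →ₗ[A] W := f.coprod s.hom
  have hΦ : Function.Surjective Φ := by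
    intro k
    obtain ⟨x, hx⟩ := hπs (g k)
    obtain ⟨n, hn⟩ := (hig (k - p x)).1 (by rw [map_sub, hp, hx, sub_self])
    exact ⟨(n, x), by change i n + p x = k; rw [hn]; abel⟩
  have hker : LinearMap.ker Φ ≤ LinearMap.ker Ψ := by
    rintro ⟨n, x⟩ hnx
    have h1 : i n + p x = 0 := hnx
    have h2 : g (i n) = 0 := (hig _).2 ⟨n, rfl⟩
    have h3 : π x = 0 := by
      have := congrArg g h1
      rwa [map_add, h2, zero_add, hp, map_zero] at this
    obtain ⟨y, rfl⟩ := res_exact A _ P π rfl x h3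
    have h4 : n + q y = 0 := hi (by rw [map_add, hq, h1, map_zero])
    change f n + s (P.complex.d 1 0 y) = 0
    rw [hs', ← map_add, h4, map_zero]
  refine ⟨(LinearMap.ker Φ).liftQ Ψ hker ∘ₗ (Φ.quotKerEquivOfSurjective hΦ).symm.toLinearMap, ?_⟩
  intro n
  have : (Φ.quotKerEquivOfSurjective hΦ).symm (i n) = Submodule.Quotient.mk (n, 0) := by
    rw [LinearEquiv.symm_apply_eq]
    change i n = i n + p 0
    simp
  change (LinearMap.ker Φ).liftQ Ψ hker ((Φ.quotKerEquivOfSurjective hΦ).symm (i n)) = f n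
  rw [this]
  change f n + s 0 = f n
  simp

/-- `N / M ≅ V`, in terms of a surjection. -/
def Fac {A E : Type} [Ring A] [AddCommGroup E] [Module A E] (M N : Submodule A E)
    (V : Type) [AddCommGroup V] [Module A V] : Prop :=
  ∃ f : N →ₗ[A] V, Function.Surjective f ∧ ∀ x : N, f x = 0 ↔ (x : E) ∈ M

lemma fac_iff {A E : Type} [Ring A] [AddCommGroup E] [Module A E] (M N : Submodule A E)
    (V : Type) [AddCommGroup V] [Module A V] :
    Fac M N V ↔ Nonempty ((↥N ⧸ Submodule.comap N.subtype M) ≃ₗ[A] V) := by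
  constructor
  · rintro ⟨f, hf, hk⟩
    have : Submodule.comap N.subtype M = LinearMap.ker f := by
      ext x; simp [hk]
    rw [this]
    exact ⟨f.quotKerEquivOfSurjective hf⟩
  · rintro ⟨e⟩
    refine ⟨e.toLinearMap ∘ₗ Submodule.mkQ _, e.surjective.comp (Submodule.mkQ_surjective _), ?_⟩
    intro x
    simp

lemma fac_swap {A E : Type} [Ring A] [AddCommGroup E] [Module A E] (M N K : Submodule A E)
    (hMN : M ≤ N) (hNK : N ≤ K)
    (V W : Type) [AddCommGroup V] [Module A V] [AddCommGroup W] [Module A W]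
    (h : Subsingleton (Ext1 A V W)) (h1 : Fac M N W) (h2 : Fac N K V) :
    ∃ N', M ≤ N' ∧ N' ≤ K ∧ Fac M N' V ∧ Fac N' K W := by
  obtain ⟨f, hf, hkf⟩ := h1
  obtain ⟨g, hg, hkg⟩ := h2
  obtain ⟨t, ht⟩ := ext1_extend A V W K N h (Submodule.inclusion hNK) g
    (Submodule.inclusion_injective hNK) hg (by
      intro x
      rw [hkg]
      constructor
      · intro hx; exact ⟨⟨x, hx⟩, rfl⟩
      · rintro ⟨y, rfl⟩; exact y.2) f
  have hN'K : (LinearMap.ker t).map K.subtype ≤ K := Submodule.map_subtype_le _ _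
  have hmem : ∀ x : K, (x : E) ∈ (LinearMap.ker t).map K.subtype ↔ t x = 0 := by
    intro x; simp
  have hM : ∀ x : K, (x : E) ∈ N → (t x = 0 ↔ (x : E) ∈ M) := by
    intro x hx
    rw [← hkf ⟨x, hx⟩, ← ht]; rfl
  refine ⟨(LinearMap.ker t).map K.subtype, ?_, hN'K, ?_, ?_⟩
  · intro x hx
    exact (hmem ⟨x, hNK (hMN hx)⟩).2 ((hM _ (hMN hx)).2 hx)
  · refine ⟨g ∘ₗ Submodule.inclusion hN'K, ?_, ?_⟩
    · intro v
      obtain ⟨k, rfl⟩ := hg v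
      obtain ⟨n, hn⟩ := hf (t k)
      refine ⟨⟨(k - Submodule.inclusion hNK n : K), (hmem _).2 ?_⟩, ?_⟩
      · rw [map_sub, ht, hn, sub_self]
      · change g (k - Submodule.inclusion hNK n) = g k
        rw [map_sub, (hkg (Submodule.inclusion hNK n)).2 n.2, sub_zero]
    · intro x
      have hx := (hmem (Submodule.inclusion hN'K x)).1 x.2
      change g (Submodule.inclusion hN'K x) = 0 ↔ _
      rw [hkg]
      constructor
      · intro hh; exact (hM _ hh).1 hx
      · intro hh; exact hMN hh
  · refine ⟨t, ?_, fun x => (hmem x).symm⟩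
    intro w
    obtain ⟨n, rfl⟩ := hf w
    exact ⟨_, ht n⟩

/-- A sorted arrangement has its marked indices at the bottom. -/
lemma sorted_card {r : ℕ} (S : Finset (Fin r)) (σ : Equiv.Perm (Fin r))
    (h : ∀ a b : Fin r, (b : ℕ) = a + 1 → σ b ∈ S → σ a ∈ S) (i : Fin r) :
    (i : ℕ) < S.card ↔ σ i ∈ S := by
  classical
  let T : Finset (Fin r) := S.map σ.symm.toEmbedding
  have hT : ∀ j, j ∈ T ↔ σ j ∈ S := by
    intro j
    simp [T, Finset.mem_map_equiv]
  have hc : T.card = S.card := Finset.card_map _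
  have hdown : ∀ n : ℕ, ∀ a b : Fin r, (b : ℕ) = a + n → σ b ∈ S → σ a ∈ S := by
    intro n
    induction n with
    | zero =>
      intro a b hab hb
      have : a = b := Fin.ext (by omega)
      rwa [this]
    | succ n ih =>
      intro a b hab hb
      exact ih a ⟨a + n, by omega⟩ rfl (h ⟨a + n, by omega⟩ b hab hb)
  rw [← hc]
  constructor
  · intro hi
    by_contra hn
    have : T ⊆ Finset.Iio i := by
      intro j hj
      rw [Finset.mem_Iio]
      by_contra hji
      have hji' : (i : ℕ) ≤ j := by simpa using hji
      exact hn (hdown (j - i) i j (by omega) ((hT j).1 hj))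
    have := Finset.card_le_card this
    rw [Fin.card_Iio] at this
    omega
  · intro hi
    have : Finset.Iic i ⊆ T := by
      intro j hj
      have hji : (j : ℕ) ≤ i := by simpa using hj
      exact (hT j).2 (hdown (i - j) j i (by omega) hi)
    have := Finset.card_le_card this
    rw [Fin.card_Iic] at this
    omega

lemma sort_aux
    (A : Type) [Ring A] (E : Type) [AddCommGroup E] [Module A E]
    (r : ℕ) (V : Fin r → Type) [∀ i, AddCommGroup (V i)] [∀ i, Module A (V i)]
    (S : Finset (Fin r))
    (hSext : ∀ i ∈ S, ∀ j ∉ S, Subsingleton (Ext1 A (V i) (V j))) (m : ℕ) :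
    ∀ (σ : Equiv.Perm (Fin r)) (G : Fin (r + 1) → Submodule A E),
      G 0 = ⊥ → G (Fin.last r) = ⊤ →
      (∀ i : Fin r, G i.castSucc ≤ G i.succ ∧ Fac (G i.castSucc) (G i.succ) (V (σ i))) →
      (∑ i : Fin r, if σ i ∈ S then (i : ℕ) else 0) = m →
    ∃ (σ : Equiv.Perm (Fin r)) (G : Fin (r + 1) → Submodule A E),
      G 0 = ⊥ ∧ G (Fin.last r) = ⊤ ∧
      (∀ i : Fin r, G i.castSucc ≤ G i.succ ∧ Fac (G i.castSucc) (G i.succ) (V (σ i))) ∧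
      (∀ i : Fin r, (i : ℕ) < S.card ↔ σ i ∈ S) := by
  induction m using Nat.strong_induction_on with
  | _ m ih =>
  intro σ G h0 h1 hG hm
  by_cases hs : ∀ a b : Fin r, (b : ℕ) = a + 1 → σ b ∈ S → σ a ∈ S
  · exact ⟨σ, G, h0, h1, hG, sorted_card S σ hs⟩
  push Not at hs
  obtain ⟨a, b, hab, hb, ha⟩ := hs
  have hba : b.castSucc = a.succ := Fin.ext (by simp [hab])
  have hne : a ≠ b := by rintro rfl; omega
  obtain ⟨hle1, hf1⟩ := hG a
  obtain ⟨hle2, hf2⟩ := hG b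
  rw [hba] at hle2 hf2
  obtain ⟨N', hMN, hNK, hV, hW⟩ :=
    fac_swap _ _ _ hle1 hle2 _ _ (hSext _ hb _ ha) hf1 hf2
  have hac : a.castSucc ≠ a.succ := fun h => by simpa using congrArg Fin.val h
  have hbs : b.succ ≠ a.succ := fun h => hne (Fin.succ_injective _ h).symm
  refine ih _ ?_ ((Equiv.swap a b).trans σ) (Function.update G a.succ N') ?_ ?_ ?_ rfl
  · rw [← hm]
    rw [← Equiv.sum_comp (Equiv.swap a b)
      (fun i => if ((Equiv.swap a b).trans σ) i ∈ S then (i : ℕ) else 0)]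
    simp only [Equiv.trans_apply, Equiv.swap_apply_self]
    refine Finset.sum_lt_sum ?_ ⟨b, Finset.mem_univ _, ?_⟩
    · intro j _
      split_ifs with hj
      · by_cases hjb : j = b
        · subst hjb; rw [Equiv.swap_apply_right]; omega
        · rw [Equiv.swap_apply_of_ne_of_ne (by rintro rfl; exact ha hj) hjb]
      · exact le_rfl
    · rw [if_pos hb, if_pos hb, Equiv.swap_apply_right]; omega
  · rw [Function.update_of_ne (Fin.succ_ne_zero a).symm, h0]
  · rw [Function.update_of_ne, h1]
    intro h
    have := congrArg Fin.val h
    simp at this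
    omega
  · intro j
    by_cases hja : j = a
    · subst hja
      rw [Function.update_self, Function.update_of_ne hac, Equiv.trans_apply,
        Equiv.swap_apply_left]
      exact ⟨hMN, hV⟩
    by_cases hjb : j = b
    · subst hjb
      rw [hba, Function.update_self, Function.update_of_ne hbs, Equiv.trans_apply,
        Equiv.swap_apply_right]
      exact ⟨hNK, hW⟩
    rw [Function.update_of_ne (fun h => hja (Fin.succ_injective _ h)),
      Function.update_of_ne (fun h => hjb (Fin.castSucc_injective _ (h.trans hba.symm))),
      Equiv.trans_apply, Equiv.swap_apply_of_ne_of_ne hja hjb]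
    exact hG j

/-- if `𝒱₀` (encoded by the set `S` of indices, assumed closed under
isomorphism of factors) is a subfamily of the composition factors of `E` with no `Ext¹`
from `𝒱₀` to its complement, then `E` has a submodule `E′` whose composition factors
(with multiplicity) are exactly the factors of `E` in `𝒱₀`, while `E/E′` has exactly the
remaining ones: there is a refiltration of `E` putting the `𝒱₀`-factors at the bottom. -/
theorem exists_submodule_with_prescribed_factors
    (A : Type) [Ring A] (E : Type) [AddCommGroup E] [Module A E]
    (r : ℕ) (V : Fin r → Type) [∀ i, AddCommGroup (V i)] [∀ i, Module A (V i)]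
    (hsimple : ∀ i, IsSimpleModule A (V i))
    (F : Fin (r + 1) → Submodule A E) (hmono : Monotone F)
    (hbot : F 0 = ⊥) (htop : F (Fin.last r) = ⊤)
    (hfactor : ∀ i : Fin r, Nonempty
      ((↥(F i.succ) ⧸ Submodule.comap (F i.succ).subtype (F i.castSucc)) ≃ₗ[A] V i))
    (S : Finset (Fin r))
    (hSiso : ∀ i j : Fin r, Nonempty (V i ≃ₗ[A] V j) → (i ∈ S ↔ j ∈ S))
    (hSext : ∀ i ∈ S, ∀ j ∉ S, Subsingleton (Ext1 A (V i) (V j))) :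
    ∃ (σ : Equiv.Perm (Fin r)) (G : Fin (r + 1) → Submodule A E),
      Monotone G ∧ G 0 = ⊥ ∧ G (Fin.last r) = ⊤ ∧
      (∀ i : Fin r, Nonempty
        ((↥(G i.succ) ⧸ Submodule.comap (G i.succ).subtype (G i.castSucc)) ≃ₗ[A] V (σ i))) ∧
      (∀ i : Fin r, (i : ℕ) < S.card ↔ σ i ∈ S) := by
  obtain ⟨σ, G, h0, h1, hG, hc⟩ := sort_aux A E r V S hSext _ (Equiv.refl _) F hbot htop
    (fun i => ⟨hmono (Fin.castSucc_le_succ i), (fac_iff _ _ _).2 (hfactor i)⟩) rfl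
  exact ⟨σ, G, Fin.monotone_iff_le_succ.2 fun i => (hG i).1, h0, h1,
    fun i => (fac_iff _ _ _).1 (hG i).2, hc⟩


end
end
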